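/- Fix k ≠ l and let m = m_{kl}. For every integer n ≥ 1 and every finite composition Ξ = D_{j_1} ∘ D_{j_2} ∘ ⋯ ∘ D_{j_p} of Demazure operators with each j_t ∈ {k, l} (including the empty composition, p = 0), the two elements Ξ(Δ_{k,l}) · G_kG_lG_k⋯ (alternating product of m + n factors starting with G_k) and Ξ(Δ_{k,l}) · G_lG_kG_l⋯ (alternating product of m + n factors starting with G_l) of 𝔇 both lie in the two-sided ideal (B) generated by the Coxeter braid relators. -/

import Mathlib

open scoped TensorProduct

noncomputable section

abbrev Vd (d : ℕ) := Fin d → ℂ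
abbrev Ad (d : ℕ) := MvPolynomial (Fin d) ℂ

/-- Action of `g ∈ GL(V)` on polynomials: substitute `X j ↦ (g⁻¹ x)_j`. -/
def glAct {d : ℕ} (g : GL (Fin d) ℂ) : Ad d →ₐ[ℂ] Ad d :=
  MvPolynomial.aeval fun j =>
    ∑ k, ((g⁻¹ : GL (Fin d) ℂ) : Matrix (Fin d) (Fin d) ℂ) j k • MvPolynomial.X k

/-- Embedding of linear forms on `V` as degree-one polynomials. -/
def lin {d : ℕ} (θ : Vd d →ₗ[ℂ] ℂ) : Ad d :=
  ∑ j, θ (Pi.single j 1) • MvPolynomial.X j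

structure CoxeterSetup (d n : ℕ) where
  Γ : Subgroup (GL (Fin d) ℂ)
  finite : Finite Γ
  s : Fin n → Γ
  gen : Subgroup.closure (Set.range s) = (⊤ : Subgroup Γ)
  α : Fin n → (Vd d →ₗ[ℂ] ℂ)
  coroot : Fin n → Vd d
  pairing : ∀ i, α i (coroot i) = 2
  refl : ∀ i (v : Vd d),
    ((s i : GL (Fin d) ℂ) : Matrix (Fin d) (Fin d) ℂ).mulVec v = v - α i v • coroot i


/-- The subalgebra of `Γ'`-invariant polynomials. -/
def FixedSub {d n : ℕ} (S : CoxeterSetup d n) (Γ' : Subgroup S.Γ) : Subalgebra ℂ (Ad d) where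
  carrier := {f | ∀ g ∈ Γ', glAct (g : GL (Fin d) ℂ) f = f}
  mul_mem' := fun hf hg g hgmem => by simp [map_mul, hf g hgmem, hg g hgmem]
  add_mem' := fun hf hg g hgmem => by simp [map_add, hf g hgmem, hg g hgmem]
  algebraMap_mem' := fun c g _ => by simp

/-- `M` (with `Γ'`-action `ρ`) descends to `A^{Γ'}`. -/
def Descends {d n : ℕ} (S : CoxeterSetup d n) (Γ' : Subgroup S.Γ) (M : Type)
    [AddCommGroup M] [Module ℂ M] [Module (Ad d) M] [IsScalarTower ℂ (Ad d) M]
    (ρ : Γ' →* Module.End ℂ M) : Prop :=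
  ∃ (N : Type) (_ : AddCommGroup N) (_ : Module (FixedSub S Γ') N)
    (e : ((Ad d) ⊗[FixedSub S Γ'] N) ≃ₗ[Ad d] M),
    ∀ (g : Γ') (a : Ad d) (x : N),
      ρ g (e (a ⊗ₜ x)) = e ((glAct ((g : S.Γ) : GL (Fin d) ℂ) a) ⊗ₜ x)


/-- Alternating product `x·y·x·⋯` with `m` factors, starting with `x`. -/
def altProd {M : Type*} [Monoid M] (x y : M) : ℕ → M
  | 0 => 1
  | (j + 1) => x * altProd y x j

/-- The order `m_{ij}` of `sᵢ sⱼ` in `Γ`. -/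
def mOrd {d n : ℕ} (S : CoxeterSetup d n) (i j : Fin n) : ℕ :=
  orderOf (S.s i * S.s j)

/-- Relations presenting the Demazure descent algebra `𝔇`: the inclusion of `A` is a
`ℂ`-algebra map, `Gᵢ² = 0`, and `Gᵢ·θ = θ(αᵢ^∨) + sᵢ(θ)·Gᵢ` for linear forms `θ`. -/
inductive DRel {d n : ℕ} (S : CoxeterSetup d n) :
    FreeAlgebra ℂ (Ad d ⊕ Fin n) → FreeAlgebra ℂ (Ad d ⊕ Fin n) → Prop
  | add (a b : Ad d) :
      DRel S (FreeAlgebra.ι ℂ (Sum.inl a) + FreeAlgebra.ι ℂ (Sum.inl b))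
        (FreeAlgebra.ι ℂ (Sum.inl (a + b)))
  | mul (a b : Ad d) :
      DRel S (FreeAlgebra.ι ℂ (Sum.inl a) * FreeAlgebra.ι ℂ (Sum.inl b))
        (FreeAlgebra.ι ℂ (Sum.inl (a * b)))
  | scalar (c : ℂ) :
      DRel S (algebraMap ℂ _ c) (FreeAlgebra.ι ℂ (Sum.inl (algebraMap ℂ (Ad d) c)))
  | sq (i : Fin n) :
      DRel S (FreeAlgebra.ι ℂ (Sum.inr i) * FreeAlgebra.ι ℂ (Sum.inr i)) 0
  | straighten (i : Fin n) (θ : Vd d →ₗ[ℂ] ℂ) :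
      DRel S (FreeAlgebra.ι ℂ (Sum.inr i) * FreeAlgebra.ι ℂ (Sum.inl (lin θ)))
        (algebraMap ℂ _ (θ (S.coroot i)) +
          FreeAlgebra.ι ℂ (Sum.inl (glAct ((S.s i : S.Γ) : GL (Fin d) ℂ) (lin θ))) *
            FreeAlgebra.ι ℂ (Sum.inr i))

/-- The Demazure descent algebra `𝔇`. -/
abbrev DD {d n : ℕ} (S : CoxeterSetup d n) := RingQuot (DRel S)

/-- The generator `Gᵢ ∈ 𝔇`. -/
def GG {d n : ℕ} (S : CoxeterSetup d n) (i : Fin n) : DD S :=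
  RingQuot.mkRingHom (DRel S) (FreeAlgebra.ι ℂ (Sum.inr i))

/-- The canonical ring homomorphism `A → 𝔇`. -/
def ofA {d n : ℕ} (S : CoxeterSetup d n) : Ad d →+* DD S where
  toFun a := RingQuot.mkRingHom (DRel S) (FreeAlgebra.ι ℂ (Sum.inl a))
  map_one' := by
    have h := RingQuot.mkRingHom_rel (DRel.scalar (S := S) 1)
    simpa using h.symm
  map_mul' a b := by
    exact ((RingQuot.mkRingHom_rel (DRel.mul (S := S) a b)).symm).trans (map_mul _ _ _)
  map_zero' := by
    have h := RingQuot.mkRingHom_rel (DRel.scalar (S := S) 0)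
    simpa using h.symm
  map_add' a b := by
    exact ((RingQuot.mkRingHom_rel (DRel.add (S := S) a b)).symm).trans (map_add _ _ _)

/-- The element `σᵢ := 1 − αᵢ·Gᵢ ∈ 𝔇`. -/
def sigmaD {d n : ℕ} (S : CoxeterSetup d n) (i : Fin n) : DD S :=
  1 - ofA S (lin (S.α i)) * GG S i

/-- The set of Coxeter braid relators `B_{ij}`. -/
def coxeterBraidSet {d n : ℕ} (S : CoxeterSetup d n) : Set (DD S) :=
  {x | ∃ i j : Fin n, i ≠ j ∧
    x = altProd (sigmaD S i) (sigmaD S j) (mOrd S i j) -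
        altProd (sigmaD S j) (sigmaD S i) (mOrd S i j)}

/-- The set of Demazure braid relators `B^D_{ij}`. -/
def demazureBraidSet {d n : ℕ} (S : CoxeterSetup d n) : Set (DD S) :=
  {x | ∃ i j : Fin n, i ≠ j ∧
    x = altProd (GG S i) (GG S j) (mOrd S i j) -
        altProd (GG S j) (GG S i) (mOrd S i j)}

/-- The product in `𝔇` of the generators `G` along a word. -/
def wordProd {d n : ℕ} (S : CoxeterSetup d n) (w : List (Fin n)) : DD S :=
  (w.map (GG S)).prod

/-- The sequence of roots `α_k, s_k(α_l), s_k s_l(α_k), …` as degree-one polynomials. -/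
def rootSeqP {d n : ℕ} (S : CoxeterSetup d n) (k l : Fin n) (j : ℕ) : Ad d :=
  glAct ((altProd (S.s k) (S.s l) j : S.Γ) : GL (Fin d) ℂ)
    (lin (S.α (if Even j then k else l)))

/-- `Δ_{k,l}`, the product of the `m_{kl}` roots `α_k, s_k(α_l), s_k s_l(α_k), …`. -/
def DeltaP {d n : ℕ} (S : CoxeterSetup d n) (k l : Fin n) : Ad d :=
  ∏ j ∈ Finset.range (mOrd S k l), rootSeqP S k l j


/-!
`𝔇` acts on `A` with `G_i` acting as `D_i`; then `σ_i` acts as `s_i`, so the braid relators act as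
zero. Expanding the two products of the `σ`s in the left `A`-span of alternating words in `G_k` and
`G_l`, the words of length `m` occur with coefficients `(-1)^m Δ_{k,l}` and `(-1)^m Δ_{l,k}`. Words
of distinct length less than `m` are told apart by the degrees of the polynomials they kill, and
the two words of a given length `0 < N < m` by polynomials of degree `N`, since a word of length
`m` does not act as zero in degree `m`. Hence the shorter words cancel, and the relator is
`(-1)^m (Δ_{k,l} G_k G_l ⋯ - Δ_{l,k} G_l G_k ⋯)`. Multiplying it on the right by more `G`s kills
one of the two terms because `G_i² = 0`, which settles `Ξ = 1` as `Δ_{k,l}` and `Δ_{l,k}` are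
proportional. Finally `G_t f = D_t(f) + s_t(f) G_t` shows that the set of `f` multiplying all the
long alternating words into `(B)` is stable under `D_k` and `D_l`.
-/

section AltProd

theorem altProd_add {M : Type*} [Monoid M] (x y : M) (i j : ℕ) :
    altProd x y (i + j) =
      altProd x y i * if Even i then altProd x y j else altProd y x j := by
  induction i generalizing x y with
  | zero => simp [altProd]
  | succ i ih =>
    rw [Nat.add_right_comm, altProd, ih y x, altProd, mul_assoc]
    simp only [Nat.even_add_one, ite_not]

theorem altProd_succ_last {M : Type*} [Monoid M] (x y : M) (i : ℕ) :
    altProd x y (i + 1) = altProd x y i * if Even i then x else y := by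
  rw [altProd_add]
  by_cases h : Even i <;> simp [h, altProd]

theorem altProd_eq_mul_pow_mul_altProd {M : Type*} [Monoid M] {x y : M} (hx : x * x = 1)
    (hy : y * y = 1) (i : ℕ) : altProd x y i = (x * y) ^ i * altProd y x i := by
  induction i generalizing x y with
  | zero => simp [altProd]
  | succ i ih =>
    calc altProd x y (i + 1) = x * (y * x) ^ i * altProd x y i := by
          rw [altProd, ih hy hx, mul_assoc]
      _ = (x * y) ^ i * x * (y * y) * altProd x y i := by
          rw [hy, mul_one, ← mul_pow_mul]
      _ = (x * y) ^ (i + 1) * altProd y x (i + 1) := by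
          simp only [pow_succ, altProd, mul_assoc]

theorem altProd_comm_iff {G : Type*} [Group G] {x y : G} (hx : x * x = 1) (hy : y * y = 1)
    (i : ℕ) : altProd x y i = altProd y x i ↔ (x * y) ^ i = 1 := by
  rw [altProd_eq_mul_pow_mul_altProd hx hy, mul_eq_right]

theorem mul_altProd_eq_zero {R : Type*} [MonoidWithZero R] {x : R} (hx : x * x = 0) (y : R)
    {i : ℕ} (hi : 0 < i) : x * altProd x y i = 0 := by
  obtain ⟨i, rfl⟩ := Nat.exists_eq_add_one.2 hi
  rw [altProd, ← mul_assoc, hx, zero_mul]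

theorem altProd_mul_altProd_eq_zero {R : Type*} [MonoidWithZero R] {x y : R} (hx : x * x = 0)
    (hy : y * y = 0) {i j : ℕ} (hi : 0 < i) (hj : 0 < j) :
    (altProd y x i * if Even i then altProd x y j else altProd y x j) = 0 := by
  obtain ⟨i, rfl⟩ := Nat.exists_eq_add_one.2 hi
  rw [altProd_succ_last, mul_assoc]
  by_cases h : Even i <;>
    simp [h, Nat.even_add_one, mul_altProd_eq_zero hx y hj, mul_altProd_eq_zero hy x hj]

end AltProd

section LinearForms

variable {d : ℕ}

theorem eval_lin (θ : Vd d →ₗ[ℂ] ℂ) (v : Vd d) : MvPolynomial.eval v (lin θ) = θ v := by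
  conv_rhs => rw [pi_eq_sum_univ' v, map_sum]
  simp [lin, map_sum, mul_comm]

theorem lin_sub_smul (θ η : Vd d →ₗ[ℂ] ℂ) (c : ℂ) :
    lin (θ - c • η) = lin θ - MvPolynomial.C c * lin η := by
  simp [lin, sub_smul, mul_smul, Finset.sum_sub_distrib, Finset.mul_sum,
    MvPolynomial.smul_eq_C_mul]

theorem lin_proj (j : Fin d) : lin (LinearMap.proj j) = MvPolynomial.X j := by
  simp [lin, Pi.single_apply]

theorem isHomogeneous_lin (θ : Vd d →ₗ[ℂ] ℂ) : (lin θ).IsHomogeneous 1 :=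
  MvPolynomial.IsHomogeneous.sum _ _ _ fun j _ => by
    rw [MvPolynomial.smul_eq_C_mul]
    exact (MvPolynomial.isHomogeneous_X ℂ j).C_mul _

theorem eval_glAct (g : GL (Fin d) ℂ) (f : Ad d) (v : Vd d) :
    MvPolynomial.eval v (glAct g f) =
      MvPolynomial.eval (((g⁻¹ : GL (Fin d) ℂ) : Matrix (Fin d) (Fin d) ℂ).mulVec v) f := by
  have h : (MvPolynomial.aeval v).comp (glAct g) = MvPolynomial.aeval
      (((g⁻¹ : GL (Fin d) ℂ) : Matrix (Fin d) (Fin d) ℂ).mulVec v) :=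
    MvPolynomial.algHom_ext fun j => by
      simp [glAct, Matrix.mulVec, dotProduct]
  simpa [MvPolynomial.aeval_eq_eval] using DFunLike.congr_fun h f

theorem glAct_lin (g : GL (Fin d) ℂ) (θ : Vd d →ₗ[ℂ] ℂ) :
    glAct g (lin θ) =
      lin (θ ∘ₗ Matrix.mulVecLin ((g⁻¹ : GL (Fin d) ℂ) : Matrix (Fin d) (Fin d) ℂ)) :=
  MvPolynomial.funext fun v => by simp [eval_glAct, eval_lin]

theorem glAct_one (f : Ad d) : glAct (1 : GL (Fin d) ℂ) f = f :=
  MvPolynomial.funext fun v => by simp [eval_glAct]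

theorem glAct_mul (g h : GL (Fin d) ℂ) (f : Ad d) :
    glAct (g * h) f = glAct g (glAct h f) :=
  MvPolynomial.funext fun v => by simp [eval_glAct]

theorem isHomogeneous_glAct (g : GL (Fin d) ℂ) {f : Ad d} {p : ℕ} (hf : f.IsHomogeneous p) :
    (glAct g f).IsHomogeneous p := by
  have hX : ∀ j, (glAct g (MvPolynomial.X j)).IsHomogeneous 1 := fun j => by
    rw [← lin_proj, glAct_lin]
    exact isHomogeneous_lin _
  rw [MvPolynomial.aeval_unique (glAct g)]
  simpa only [one_mul] using hf.aeval (glAct g ∘ MvPolynomial.X) hX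

end LinearForms

attribute [local instance] MvPolynomial.gradedAlgebra in
theorem isHomogeneous_of_mul_left {σ R : Type*} [CommRing R] [IsDomain R]
    {f g : MvPolynomial σ R} {m p : ℕ} (hf : f.IsHomogeneous m) (hf0 : f ≠ 0)
    (hfg : (f * g).IsHomogeneous (m + p)) : g.IsHomogeneous p := by
  classical
  have hg := DirectSum.coe_decompose_mul_add_of_left_mem (MvPolynomial.homogeneousSubmodule σ R)
    (i := m) (j := p) (b := g) hf
  rw [DirectSum.decompose_of_mem_same _ hfg] at hg
  rw [mul_left_cancel₀ hf0 hg]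
  exact (DirectSum.decompose (MvPolynomial.homogeneousSubmodule σ R) g p).2

namespace CoxeterSetup

open MvPolynomial

variable {d n : ℕ} (S : CoxeterSetup d n)

section Actions

/-- The reflection representation of `Γ` on `V`. -/
def rep : S.Γ →* Module.End ℂ (Vd d) :=
  (Units.coeHom _).comp (Matrix.GeneralLinearGroup.toLin.toMonoidHom.comp S.Γ.subtype)

theorem rep_injective : Function.Injective S.rep :=
  Units.val_injective.comp (Matrix.GeneralLinearGroup.toLin.injective.comp Subtype.val_injective)

theorem rep_s (i : Fin n) : S.rep (S.s i) = Module.preReflection (S.coroot i) (S.α i) :=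
  LinearMap.ext fun v => by
    simpa [rep, Module.preReflection_apply] using S.refl i v

theorem s_mul_self (i : Fin n) : S.s i * S.s i = 1 :=
  S.rep_injective <| by
    rw [map_mul, map_one, rep_s, Module.End.mul_eq_comp]
    exact LinearMap.ext (Module.involutive_preReflection (S.pairing i))

theorem s_inv (i : Fin n) : (S.s i)⁻¹ = S.s i :=
  inv_eq_of_mul_eq_one_left (S.s_mul_self i)

/-- The action of `Γ` on `A = ℂ[V]` by algebra endomorphisms. -/
def act : S.Γ →* (Ad d →ₐ[ℂ] Ad d) where
  toFun g := glAct (g : GL (Fin d) ℂ)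
  map_one' := AlgHom.ext glAct_one
  map_mul' g h := AlgHom.ext (glAct_mul (g : GL (Fin d) ℂ) h)

theorem act_apply (g : S.Γ) (f : Ad d) : S.act g f = glAct (g : GL (Fin d) ℂ) f :=
  rfl

theorem act_lin (g : S.Γ) (θ : Vd d →ₗ[ℂ] ℂ) : S.act g (lin θ) = lin (θ ∘ₗ S.rep g⁻¹) :=
  glAct_lin _ θ

theorem act_s_lin (i : Fin n) (θ : Vd d →ₗ[ℂ] ℂ) :
    S.act (S.s i) (lin θ) = lin θ - C (θ (S.coroot i)) * lin (S.α i) := by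
  rw [act_lin, s_inv, rep_s, ← lin_sub_smul]
  congr 1
  ext
  simp [Module.preReflection_apply, mul_comm]

theorem act_act_s (i : Fin n) (f : Ad d) : S.act (S.s i) (S.act (S.s i) f) = f := by
  rw [← AlgHom.mul_apply, ← map_mul, s_mul_self, map_one, AlgHom.one_apply]

theorem isHomogeneous_act (g : S.Γ) {f : Ad d} {p : ℕ} (hf : f.IsHomogeneous p) :
    (S.act g f).IsHomogeneous p :=
  isHomogeneous_glAct _ hf

theorem lin_α_ne_zero (i : Fin n) : lin (S.α i) ≠ 0 := fun h => by
  have := S.pairing i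
  rw [← eval_lin, h, map_zero] at this
  exact two_ne_zero this.symm

end Actions

section Demazure

theorem lin_α_dvd_sub_act (i : Fin n) (f : Ad d) : lin (S.α i) ∣ f - S.act (S.s i) f := by
  induction f using MvPolynomial.induction_on with
  | C a => rw [algHom_C, algebraMap_eq, sub_self]; exact dvd_zero _
  | add f g hf hg => rw [map_add, add_sub_add_comm]; exact dvd_add hf hg
  | mul_X f j hf =>
    rw [← lin_proj, map_mul, act_s_lin]
    convert dvd_add (hf.mul_right (lin (LinearMap.proj j)))
      (dvd_mul_right _ (C (S.coroot i j) * S.act (S.s i) f)) using 1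
    simp only [LinearMap.proj_apply]
    ring

/-- The Demazure operator `D_i` on `A`, with the quotient `α_i⁻¹ (f - s_i f)` taken in `A`. -/
def demazure (i : Fin n) : Module.End ℂ (Ad d) where
  toFun f := (S.lin_α_dvd_sub_act i f).choose
  map_add' f g := mul_left_cancel₀ (S.lin_α_ne_zero i) <| by
    rw [mul_add, ← (S.lin_α_dvd_sub_act i (f + g)).choose_spec,
      ← (S.lin_α_dvd_sub_act i f).choose_spec, ← (S.lin_α_dvd_sub_act i g).choose_spec,
      map_add, add_sub_add_comm]
  map_smul' c f := mul_left_cancel₀ (S.lin_α_ne_zero i) <| by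
    rw [RingHom.id_apply, mul_smul_comm, ← (S.lin_α_dvd_sub_act i (c • f)).choose_spec,
      ← (S.lin_α_dvd_sub_act i f).choose_spec, map_smul, smul_sub]

theorem lin_α_mul_demazure (i : Fin n) (f : Ad d) :
    lin (S.α i) * S.demazure i f = f - S.act (S.s i) f :=
  (S.lin_α_dvd_sub_act i f).choose_spec.symm

theorem eq_demazure {i : Fin n} {f g : Ad d} (h : lin (S.α i) * g = f - S.act (S.s i) f) :
    g = S.demazure i f :=
  mul_left_cancel₀ (S.lin_α_ne_zero i) (h.trans (S.lin_α_mul_demazure i f).symm)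

theorem demazure_eq_zero {i : Fin n} {f : Ad d} (h : S.act (S.s i) f = f) :
    S.demazure i f = 0 :=
  (S.eq_demazure (by rw [mul_zero, h, sub_self])).symm

theorem demazure_C (i : Fin n) (c : ℂ) : S.demazure i (C c) = 0 :=
  S.demazure_eq_zero (algHom_C _ c)

theorem demazure_lin (i : Fin n) (θ : Vd d →ₗ[ℂ] ℂ) :
    S.demazure i (lin θ) = C (θ (S.coroot i)) :=
  (S.eq_demazure (by rw [act_s_lin]; ring)).symm

theorem demazure_act_lin (i : Fin n) (g : S.Γ) (θ : Vd d →ₗ[ℂ] ℂ) :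
    S.demazure i (S.act g (lin θ)) = C (θ (S.rep g⁻¹ (S.coroot i))) := by
  rw [act_lin, demazure_lin, LinearMap.comp_apply]

theorem demazure_mul (i : Fin n) (f g : Ad d) :
    S.demazure i (f * g) = S.demazure i f * g + S.act (S.s i) f * S.demazure i g := by
  refine (S.eq_demazure ?_).symm
  rw [map_mul]
  linear_combination g * S.lin_α_mul_demazure i f +
    S.act (S.s i) f * S.lin_α_mul_demazure i g

theorem act_s_demazure (i : Fin n) (f : Ad d) :
    S.act (S.s i) (S.demazure i f) = S.demazure i f := by
  refine mul_left_cancel₀ (S.lin_α_ne_zero i) ?_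
  have h := congrArg (S.act (S.s i)) (S.lin_α_mul_demazure i f)
  rw [map_mul, map_sub, act_act_s, act_s_lin, S.pairing, map_ofNat] at h
  linear_combination -h - S.lin_α_mul_demazure i f

theorem demazure_demazure (i : Fin n) (f : Ad d) : S.demazure i (S.demazure i f) = 0 :=
  S.demazure_eq_zero (S.act_s_demazure i f)

theorem isHomogeneous_demazure (i : Fin n) {f : Ad d} {p : ℕ} (hf : f.IsHomogeneous (p + 1)) :
    (S.demazure i f).IsHomogeneous p := by
  refine isHomogeneous_of_mul_left (isHomogeneous_lin (S.α i)) (S.lin_α_ne_zero i) ?_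
  rw [lin_α_mul_demazure, add_comm 1 p]
  exact hf.sub (S.isHomogeneous_act _ hf)

theorem demazure_eq_zero_of_isHomogeneous_zero (i : Fin n) {f : Ad d} (hf : f.IsHomogeneous 0) :
    S.demazure i f = 0 := by
  rw [totalDegree_eq_zero_iff_eq_C.1 ((totalDegree_zero_iff_isHomogeneous _).2 hf), demazure_C]

end Demazure

section DescentAlgebra

theorem ofA_C (c : ℂ) : ofA S (C c) = algebraMap ℂ (DD S) c :=
  calc
    ofA S (C c) = RingQuot.mkRingHom (DRel S) (algebraMap ℂ _ c) :=
      (RingQuot.mkRingHom_rel (DRel.scalar c)).symm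
    _ = RingQuot.mkAlgHom ℂ (DRel S) (algebraMap ℂ _ c) := by
      rw [← RingQuot.mkAlgHom_coe ℂ]; rfl
    _ = algebraMap ℂ (DD S) c := AlgHom.commutes _ c

theorem GG_mul_self (i : Fin n) : GG S i * GG S i = 0 := by
  simpa [GG] using RingQuot.mkRingHom_rel (DRel.sq (S := S) i)

theorem GG_mul_ofA_lin (i : Fin n) (θ : Vd d →ₗ[ℂ] ℂ) :
    GG S i * ofA S (lin θ) =
      ofA S (C (θ (S.coroot i))) + ofA S (S.act (S.s i) (lin θ)) * GG S i := by
  have h := RingQuot.mkRingHom_rel (DRel.straighten (S := S) i θ)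
  rw [map_add, map_mul, map_mul, RingQuot.mkRingHom_rel (DRel.scalar (S := S) _)] at h
  exact h

theorem GG_mul_ofA (i : Fin n) (f : Ad d) :
    GG S i * ofA S f = ofA S (S.demazure i f) + ofA S (S.act (S.s i) f) * GG S i := by
  induction f using MvPolynomial.induction_on with
  | C c =>
    rw [demazure_C, algHom_C, algebraMap_eq, map_zero, zero_add, ofA_C]
    exact (Algebra.commutes c _).symm
  | add f g hf hg => simp only [map_add, mul_add, add_mul, hf, hg]; abel
  | mul_X f j hf =>
    rw [← lin_proj, map_mul, ← mul_assoc, hf, add_mul, mul_assoc, GG_mul_ofA_lin, demazure_mul,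
      demazure_lin]
    simp only [map_mul, map_add, mul_add, mul_assoc, add_assoc]

instance : Module (Ad d) (DD S) :=
  Module.compHom _ (ofA S)

instance : IsScalarTower (Ad d) (DD S) (DD S) :=
  ⟨fun f x y => mul_assoc (ofA S f) x y⟩

theorem smul_eq_ofA_mul (f : Ad d) (x : DD S) : f • x = ofA S f * x :=
  rfl

theorem GG_mul_smul (i : Fin n) (f : Ad d) (x : DD S) :
    GG S i * f • x = S.demazure i f • x + S.act (S.s i) f • (GG S i * x) := by
  simp only [smul_eq_ofA_mul, ← mul_assoc, GG_mul_ofA, add_mul]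

theorem GG_mul_C_smul (i : Fin n) (c : ℂ) (x : DD S) :
    GG S i * (C c : Ad d) • x = (C c : Ad d) • (GG S i * x) := by
  rw [GG_mul_smul, demazure_C, zero_smul, zero_add, algHom_C, algebraMap_eq]

theorem sigmaD_mul (i : Fin n) (x : DD S) :
    sigmaD S i * x = x - lin (S.α i) • (GG S i * x) := by
  rw [sigmaD, sub_mul, one_mul, mul_assoc, smul_eq_ofA_mul]

theorem sigmaD_mul_smul (i : Fin n) (f : Ad d) (x : DD S) :
    sigmaD S i * f • x = S.act (S.s i) f • (sigmaD S i * x) := by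
  have h : S.act (S.s i) f = f - lin (S.α i) * S.demazure i f := by
    rw [lin_α_mul_demazure, sub_sub_cancel]
  rw [sigmaD_mul, sigmaD_mul, GG_mul_smul, h]
  module

/-- The polynomial representation of `𝔇`: `A` acts on itself by multiplication and `G_i` acts
as the Demazure operator `D_i`. -/
def polyAction : DD S →+* Module.End ℂ (Ad d) :=
  RingQuot.lift ⟨(FreeAlgebra.lift ℂ (Sum.elim (LinearMap.mulLeft ℂ) S.demazure) :
    FreeAlgebra ℂ (Ad d ⊕ Fin n) →ₐ[ℂ] Module.End ℂ (Ad d)), by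
    rintro _ _ (⟨f, g⟩ | ⟨f, g⟩ | c | i | ⟨i, θ⟩) <;> refine LinearMap.ext fun p => ?_
    · simp [add_mul]
    · simp
    · simp [smul_eq_C_mul]
    · simp [demazure_demazure]
    · simpa [demazure_lin, smul_eq_C_mul, act_apply] using S.demazure_mul i (lin θ) p⟩

theorem polyAction_ofA (f g : Ad d) : S.polyAction (ofA S f) g = f * g := by
  simp [polyAction, ofA, RingQuot.lift_mkRingHom_apply]

theorem polyAction_GG (i : Fin n) (f : Ad d) : S.polyAction (GG S i) f = S.demazure i f := by
  simp [polyAction, GG, RingQuot.lift_mkRingHom_apply]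

theorem polyAction_smul (f : Ad d) (x : DD S) (g : Ad d) :
    S.polyAction (f • x) g = f * S.polyAction x g := by
  rw [smul_eq_ofA_mul, map_mul, Module.End.mul_apply, polyAction_ofA]

theorem polyAction_sigmaD (i : Fin n) (f : Ad d) :
    S.polyAction (sigmaD S i) f = S.act (S.s i) f := by
  rw [sigmaD, map_sub, map_one, map_mul, LinearMap.sub_apply, Module.End.mul_apply,
    polyAction_GG, polyAction_ofA, lin_α_mul_demazure, Module.End.one_apply, sub_sub_cancel]

theorem polyAction_altProd_sigmaD (k l : Fin n) (N : ℕ) (f : Ad d) :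
    S.polyAction (altProd (sigmaD S k) (sigmaD S l) N) f =
      S.act (altProd (S.s k) (S.s l) N) f := by
  induction N generalizing k l with
  | zero => simp [altProd]
  | succ N ih =>
    rw [altProd, map_mul, Module.End.mul_apply, ih, polyAction_sigmaD, altProd, map_mul,
      AlgHom.mul_apply]

theorem isHomogeneous_polyAction_altProd_GG (k l : Fin n) (N : ℕ) {p : ℕ} {f : Ad d}
    (hf : f.IsHomogeneous (p + N)) :
    (S.polyAction (altProd (GG S k) (GG S l) N) f).IsHomogeneous p := by
  induction N generalizing k l p with
  | zero => simpa [altProd] using hf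
  | succ N ih =>
    rw [altProd, map_mul, Module.End.mul_apply, polyAction_GG]
    exact S.isHomogeneous_demazure k (ih l k (by rwa [add_right_comm, add_assoc]))

theorem polyAction_altProd_GG_eq_zero (k l : Fin n) {N p : ℕ} {f : Ad d}
    (hf : f.IsHomogeneous p) (hp : p < N) :
    S.polyAction (altProd (GG S k) (GG S l) N) f = 0 := by
  have hvanish (a b : Fin n) : S.polyAction (altProd (GG S a) (GG S b) (p + 1)) f = 0 := by
    rw [altProd, map_mul, Module.End.mul_apply, polyAction_GG]
    refine S.demazure_eq_zero_of_isHomogeneous_zero a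
      (S.isHomogeneous_polyAction_altProd_GG b a p ?_)
    rwa [zero_add]
  obtain ⟨j, rfl⟩ := Nat.exists_eq_add_of_le' (Nat.succ_le_of_lt hp)
  rw [altProd_add, map_mul, Module.End.mul_apply]
  by_cases hj : Even j <;> simp [hj, hvanish]

end DescentAlgebra

section Dihedral

theorem mOrd_comm (k l : Fin n) : mOrd S k l = mOrd S l k := by
  rw [mOrd, mOrd, ← orderOf_inv, mul_inv_rev, s_inv, s_inv]

theorem mOrd_pos (k l : Fin n) : 0 < mOrd S k l :=
  have := S.finite
  orderOf_pos _

theorem altProd_s_comm_iff (k l : Fin n) (N : ℕ) :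
    altProd (S.s k) (S.s l) N = altProd (S.s l) (S.s k) N ↔ mOrd S k l ∣ N := by
  rw [altProd_comm_iff (S.s_mul_self k) (S.s_mul_self l), mOrd, orderOf_dvd_iff_pow_eq_one]

theorem polyAction_braidRelator (k l : Fin n) (f : Ad d) :
    S.polyAction (altProd (sigmaD S k) (sigmaD S l) (mOrd S k l) -
      altProd (sigmaD S l) (sigmaD S k) (mOrd S k l)) f = 0 := by
  rw [map_sub, LinearMap.sub_apply, polyAction_altProd_sigmaD, polyAction_altProd_sigmaD,
    (S.altProd_s_comm_iff k l _).2 dvd_rfl, sub_self]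

theorem altProd_GG_mul_ofA_lin (k l : Fin n) (θ : Vd d →ₗ[ℂ] ℂ) (i : ℕ) :
    altProd (GG S k) (GG S l) (i + 2) * ofA S (lin θ) =
      S.act (altProd (S.s k) (S.s l) (i + 2)) (lin θ) • altProd (GG S k) (GG S l) (i + 2) +
      (C (θ (S.rep (altProd (S.s l) (S.s k) (i + 1))⁻¹ (S.coroot k))) : Ad d) •
        altProd (GG S l) (GG S k) (i + 1) +
      (C (θ (S.coroot (if Even i then l else k))) : Ad d) •
        altProd (GG S k) (GG S l) (i + 1) := by
  induction i generalizing k l with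
  | zero =>
    have hl : GG S l * ofA S (lin θ) =
        (C (θ (S.coroot l)) : Ad d) • 1 + S.act (S.s l) (lin θ) • GG S l := by
      rw [GG_mul_ofA, demazure_lin, smul_eq_ofA_mul, mul_one, smul_eq_ofA_mul]
    simp only [altProd, mul_one, if_pos Even.zero]
    rw [mul_assoc, hl, mul_add, GG_mul_C_smul, GG_mul_smul, demazure_act_lin, mul_one, map_mul,
      AlgHom.mul_apply]
    abel
  | succ i ih =>
    have hzero : GG S k * altProd (GG S k) (GG S l) (i + 1) = 0 :=
      mul_altProd_eq_zero (S.GG_mul_self k) _ i.succ_pos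
    have hcons (N : ℕ) : GG S k * altProd (GG S l) (GG S k) N = altProd (GG S k) (GG S l) (N + 1) :=
      rfl
    simp only [Nat.even_add_one, ite_not]
    rw [altProd, mul_assoc, ih, mul_add, mul_add, GG_mul_smul, GG_mul_C_smul, GG_mul_C_smul, hzero,
      smul_zero, add_zero, demazure_act_lin, hcons, hcons, ← AlgHom.mul_apply,
      ← map_mul, add_comm (C _ • _)]
    rfl

theorem eq_of_rep_eq_preReflection {g h : S.Γ} {v : Vd d} {θ η : Module.Dual ℂ (Vd d)}
    (hθ : θ v = 2) (hη : η v = 2) (hg : S.rep g = Module.preReflection v θ)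
    (hh : S.rep h = Module.preReflection v η) : g = h := by
  have := S.finite
  let Φ : Set (Vd d) := Set.range fun q : S.Γ × Fin d => S.rep q.1 (Pi.single q.2 1)
  have hspan : Submodule.span ℂ Φ = ⊤ := by
    rw [eq_top_iff, ← (Pi.basisFun ℂ (Fin d)).span_eq, Submodule.span_le]
    rintro _ ⟨j, rfl⟩
    exact Submodule.subset_span ⟨(1, j), by simp⟩
  have hmaps (γ : S.Γ) : Set.MapsTo (S.rep γ) Φ Φ := by
    rintro _ ⟨⟨δ, j⟩, rfl⟩
    exact ⟨(γ * δ, j), by simp⟩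
  apply S.rep_injective
  rw [hg, hh, Module.Dual.eq_of_preReflection_mapsTo (Set.finite_range _) hspan hθ
    (hg ▸ hmaps g) hη (hh ▸ hmaps h)]

theorem s_mul_eq_mul_s_of_rep_coroot {k p : Fin n} {g : S.Γ} {c : ℂ}
    (h : S.rep g (S.coroot k) = c • S.coroot p) : S.s p * g = g * S.s k := by
  have hleft (v : Vd d) : S.rep g⁻¹ (S.rep g v) = v := by simp [← Module.End.mul_apply, ← map_mul]
  have hright (v : Vd d) : S.rep g (S.rep g⁻¹ v) = v := by simp [← Module.End.mul_apply, ← map_mul]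
  rw [← eq_mul_inv_iff_mul_eq]
  refine S.eq_of_rep_eq_preReflection (v := S.coroot p) (S.pairing p)
    (η := c • S.α k ∘ₗ S.rep g⁻¹) ?_ (S.rep_s p) (LinearMap.ext fun v => ?_)
  · rw [LinearMap.smul_apply, LinearMap.comp_apply, ← map_smul, ← map_smul, ← h, hleft, S.pairing]
  · simp [rep_s, Module.preReflection_apply, h, hright, smul_smul, mul_comm]

-- Otherwise `s_k` and `w s_p w⁻¹` are the same reflection for `w = s_l s_k ⋯` and `s_p` its last
-- letter, and then `w = s_k s_l ⋯` with the same number `i + 1 < m_{kl}` of factors.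
theorem coroot_notMem_span (k l : Fin n) {i : ℕ} (hi : i + 1 < mOrd S k l) :
    S.coroot (if Even i then l else k) ∉
      ℂ ∙ S.rep (altProd (S.s l) (S.s k) (i + 1))⁻¹ (S.coroot k) := by
  set p := if Even i then l else k with hp
  set w := altProd (S.s l) (S.s k) (i + 1) with hw
  intro hmem
  obtain ⟨c, hc⟩ := Submodule.mem_span_singleton.1 hmem
  have hcomm : S.s k * w = w * S.s p := S.s_mul_eq_mul_s_of_rep_coroot (c := c) <| by
    rw [← hc, map_smul, ← Module.End.mul_apply, ← map_mul, mul_inv_cancel, map_one,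
      Module.End.one_apply]
  have hlast : w * S.s p = altProd (S.s l) (S.s k) i := by
    rw [hw, altProd_succ_last, mul_assoc, ← apply_ite, ← hp, s_mul_self, mul_one]
  have hbraid : altProd (S.s k) (S.s l) (i + 1) = w := by
    rw [altProd, ← hlast, ← hcomm, ← mul_assoc, s_mul_self, one_mul]
  exact Nat.not_dvd_of_pos_of_lt i.succ_pos hi ((S.altProd_s_comm_iff k l _).1 hbraid)

-- A linear form `θ` killing one of the two shorter terms of `altProd_GG_mul_ofA_lin` but not the
-- other turns a polynomial of degree `N` for `N + 1` factors into one for `N + 2` factors.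
theorem exists_polyAction_altProd_GG_ne_zero (k l : Fin n) {N : ℕ} (hN : N ≤ mOrd S k l) :
    ∃ f : Ad d, f.IsHomogeneous N ∧ S.polyAction (altProd (GG S k) (GG S l) N) f ≠ 0 := by
  induction N using Nat.twoStepInduction generalizing k l with
  | zero => exact ⟨1, isHomogeneous_one _ _, by simp [altProd]⟩
  | one =>
    refine ⟨lin (S.α k), isHomogeneous_lin _, ?_⟩
    simp [altProd, polyAction_GG, demazure_lin, S.pairing]
  | more i _ ih =>
    obtain ⟨f, hf, hf0⟩ := ih k l (Nat.le_of_succ_le hN)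
    obtain ⟨θ, hθ, hker⟩ := Submodule.exists_le_ker_of_notMem (S.coroot_notMem_span k l hN)
    have hθ0 : θ (S.rep (altProd (S.s l) (S.s k) (i + 1))⁻¹ (S.coroot k)) = 0 :=
      hker (Submodule.mem_span_singleton_self _)
    refine ⟨lin θ * f, (add_comm (i + 1) 1) ▸ (isHomogeneous_lin θ).mul hf, ?_⟩
    rw [← polyAction_ofA, ← Module.End.mul_apply, ← map_mul, altProd_GG_mul_ofA_lin, hθ0]
    simp only [map_add, LinearMap.add_apply, polyAction_smul]
    rw [S.polyAction_altProd_GG_eq_zero k l hf (Nat.lt_succ_self _)]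
    simpa using ⟨hθ, hf0⟩

end Dihedral

section Independence

theorem exists_polyAction_altProd_GG_separating (k l : Fin n) {N : ℕ} (hN : 0 < N)
    (hNm : N < mOrd S k l) :
    ∃ f : Ad d, f.IsHomogeneous N ∧ S.polyAction (altProd (GG S k) (GG S l) N) f ≠ 0 ∧
      S.polyAction (altProd (GG S l) (GG S k) N) f = 0 := by
  obtain ⟨f, hf, hf0⟩ := S.exists_polyAction_altProd_GG_ne_zero k l le_rfl
  obtain ⟨j, hm⟩ := Nat.exists_eq_add_of_lt hNm
  rw [hm, add_assoc] at hf hf0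
  let W := if Even N then altProd (GG S k) (GG S l) (j + 1)
    else altProd (GG S l) (GG S k) (j + 1)
  refine ⟨S.polyAction W f, ?_, ?_, ?_⟩
  · by_cases h : Even N <;> simp only [W, h, if_true, if_false] <;>
      exact S.isHomogeneous_polyAction_altProd_GG _ _ _ hf
  · rwa [← Module.End.mul_apply, ← map_mul, ← altProd_add]
  · rw [← Module.End.mul_apply, ← map_mul,
      altProd_mul_altProd_eq_zero (S.GG_mul_self k) (S.GG_mul_self l) hN j.succ_pos, map_zero,
      LinearMap.zero_apply]

/-- The left `A`-submodule of `𝔇` spanned by the alternating products of `G_k` and `G_l` with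
fewer than `N` factors. -/
def altSpan (k l : Fin n) (N : ℕ) : Submodule (Ad d) (DD S) :=
  Submodule.span (Ad d)
    (altProd (GG S k) (GG S l) '' Set.Iio N ∪ altProd (GG S l) (GG S k) '' Set.Iio N)

theorem altSpan_comm (k l : Fin n) (N : ℕ) : S.altSpan k l N = S.altSpan l k N := by
  rw [altSpan, altSpan, Set.union_comm]

theorem altProd_GG_mem_altSpan (k l : Fin n) {j N : ℕ} (hj : j < N) :
    altProd (GG S k) (GG S l) j ∈ S.altSpan k l N :=
  Submodule.subset_span (Or.inl ⟨j, hj, rfl⟩)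

theorem altSpan_zero (k l : Fin n) : S.altSpan k l 0 = ⊥ := by
  simp [altSpan]

theorem mem_altSpan_succ {k l : Fin n} {N : ℕ} {x : DD S} :
    x ∈ S.altSpan k l (N + 1) ↔ ∃ a b : Ad d, ∃ y ∈ S.altSpan k l N,
      x = a • altProd (GG S k) (GG S l) N + b • altProd (GG S l) (GG S k) N + y := by
  simp only [altSpan, ← Order.succ_eq_add_one, Order.Iio_succ_eq_insert, Set.image_insert_eq,
    Set.insert_union, Set.union_insert, Submodule.mem_span_insert]
  constructor
  · rintro ⟨b, _, ⟨a, y, hy, rfl⟩, rfl⟩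
    exact ⟨a, b, y, hy, by abel⟩
  · rintro ⟨a, b, y, hy, rfl⟩
    exact ⟨b, _, ⟨a, y, hy, rfl⟩, by abel⟩

theorem sigmaD_mul_mem_altSpan (k l : Fin n) {N : ℕ} {x : DD S} (hx : x ∈ S.altSpan k l N) :
    sigmaD S k * x ∈ S.altSpan k l (N + 1) := by
  induction hx using Submodule.span_induction with
  | zero => simp
  | add x y _ _ hx hy => rw [mul_add]; exact add_mem hx hy
  | smul f x _ hx => rw [sigmaD_mul_smul]; exact Submodule.smul_mem _ _ hx
  | mem x hx =>
    rw [sigmaD_mul]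
    rcases hx with ⟨j, hj : j < N, rfl⟩ | ⟨j, hj : j < N, rfl⟩
    · refine sub_mem (S.altProd_GG_mem_altSpan k l (by lia)) (Submodule.smul_mem _ _ ?_)
      rcases j.eq_zero_or_pos with rfl | hj0
      · exact S.altProd_GG_mem_altSpan k l (j := 1) (by lia)
      · rw [mul_altProd_eq_zero (S.GG_mul_self k) _ hj0]
        exact zero_mem _
    · refine sub_mem ?_ (Submodule.smul_mem _ _ ?_)
      · exact S.altSpan_comm l k _ ▸ S.altProd_GG_mem_altSpan l k (by lia)
      · exact S.altProd_GG_mem_altSpan k l (j := j + 1) (by lia)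

theorem rootSeqP_zero (k l : Fin n) : rootSeqP S k l 0 = lin (S.α k) := by
  simp [rootSeqP, altProd, glAct_one]

theorem rootSeqP_succ (k l : Fin n) (j : ℕ) :
    rootSeqP S k l (j + 1) = S.act (S.s k) (rootSeqP S l k j) := by
  simp only [rootSeqP, ← act_apply, altProd, map_mul, AlgHom.mul_apply, Nat.even_add_one, ite_not]

theorem altProd_sigmaD_sub_mem_altSpan (k l : Fin n) (N : ℕ) :
    altProd (sigmaD S k) (sigmaD S l) N -
      ((-1) ^ N * ∏ j ∈ Finset.range N, rootSeqP S k l j) • altProd (GG S k) (GG S l) N ∈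
        S.altSpan k l N := by
  induction N generalizing k l with
  | zero => simp [altProd]
  | succ N ih =>
    set a : Ad d := (-1) ^ N * ∏ j ∈ Finset.range N, rootSeqP S l k j with ha
    have hcoeff : (-1) ^ (N + 1) * ∏ j ∈ Finset.range (N + 1), rootSeqP S k l j =
        -(S.act (S.s k) a * lin (S.α k)) := by
      simp only [ha, Finset.prod_range_succ', rootSeqP_succ, rootSeqP_zero, map_mul, map_prod,
        map_pow, map_neg, map_one]
      ring
    have hy := S.sigmaD_mul_mem_altSpan k l (S.altSpan_comm l k N ▸ ih l k)
    have hA : altProd (GG S l) (GG S k) N ∈ S.altSpan k l (N + 1) :=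
      S.altSpan_comm l k _ ▸ S.altProd_GG_mem_altSpan l k N.lt_succ_self
    convert add_mem hy (Submodule.smul_mem _ (S.act (S.s k) a) hA) using 1
    rw [mul_sub, sigmaD_mul_smul, sigmaD_mul S k (altProd (GG S l) _ _), hcoeff, altProd,
      altProd]
    module

theorem eq_zero_of_mem_altSpan {k l : Fin n} {N : ℕ} (hN : N ≤ mOrd S k l) {x : DD S}
    (hx : x ∈ S.altSpan k l N)
    (h0 : ∀ p < N, ∀ f : Ad d, f.IsHomogeneous p → S.polyAction x f = 0) : x = 0 := by
  induction N generalizing x with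
  | zero => simpa [altSpan_zero] using hx
  | succ N ih =>
    obtain ⟨a, b, y, hy, rfl⟩ := S.mem_altSpan_succ.1 hx
    simp only [map_add, LinearMap.add_apply, polyAction_smul] at h0
    obtain rfl : y = 0 := ih (Nat.le_of_succ_le hN) hy fun p hp f hf => by
      simpa [S.polyAction_altProd_GG_eq_zero _ _ hf hp] using h0 p (Nat.lt_succ_of_lt hp) f hf
    rcases N.eq_zero_or_pos with rfl | hN0
    · have hab : a + b = 0 := by
        simpa [altProd] using h0 0 Nat.one_pos 1 (isHomogeneous_one _ _)
      rw [altProd, altProd, ← add_smul, hab, zero_smul, zero_add]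
    · obtain ⟨f, hf, hf1, hf2⟩ := S.exists_polyAction_altProd_GG_separating k l hN0 hN
      obtain ⟨g, hg, hg1, hg2⟩ := S.exists_polyAction_altProd_GG_separating l k hN0
        (by rwa [mOrd_comm])
      have ha : a = 0 := by simpa [hf1, hf2] using h0 N N.lt_succ_self f hf
      have hb : b = 0 := by simpa [hg1, hg2] using h0 N N.lt_succ_self g hg
      rw [ha, hb, zero_smul, zero_smul, add_zero, add_zero]

theorem braidRelator_eq (k l : Fin n) :
    altProd (sigmaD S k) (sigmaD S l) (mOrd S k l) -
        altProd (sigmaD S l) (sigmaD S k) (mOrd S k l) =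
      (-1 : Ad d) ^ mOrd S k l • (DeltaP S k l • altProd (GG S k) (GG S l) (mOrd S k l) -
        DeltaP S l k • altProd (GG S l) (GG S k) (mOrd S k l)) := by
  rw [← sub_eq_zero]
  refine S.eq_zero_of_mem_altSpan (k := k) (l := l) le_rfl ?_ fun p hp f hf => ?_
  · convert sub_mem (S.altProd_sigmaD_sub_mem_altSpan k l (mOrd S k l))
      (S.altSpan_comm l k _ ▸ S.altProd_sigmaD_sub_mem_altSpan l k (mOrd S k l)) using 1
    simp only [DeltaP, mOrd_comm S l k]
    module
  · rw [map_sub, LinearMap.sub_apply, polyAction_braidRelator]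
    simp [polyAction_smul, S.polyAction_altProd_GG_eq_zero _ _ hf hp]

theorem exists_DeltaP_eq_C_mul (k l : Fin n) : ∃ c : ℂ, DeltaP S k l = C c * DeltaP S l k := by
  obtain ⟨f, hf, hf0⟩ := S.exists_polyAction_altProd_GG_ne_zero k l le_rfl
  have hconst (a b : Fin n) :
      ∃ c, S.polyAction (altProd (GG S a) (GG S b) (mOrd S k l)) f = C c :=
    ⟨_, totalDegree_eq_zero_iff_eq_C.1 <| (totalDegree_zero_iff_isHomogeneous _).2 <|
      S.isHomogeneous_polyAction_altProd_GG a b _ (by rwa [zero_add])⟩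
  obtain ⟨a, ha⟩ := hconst k l
  obtain ⟨b, hb⟩ := hconst l k
  have h := S.polyAction_braidRelator k l f
  rw [braidRelator_eq, polyAction_smul, map_sub, LinearMap.sub_apply, polyAction_smul,
    polyAction_smul, ha, hb] at h
  have hmul : DeltaP S k l * C a = DeltaP S l k * C b :=
    sub_eq_zero.1 ((mul_eq_zero.1 h).resolve_left (pow_ne_zero _ (neg_ne_zero.2 one_ne_zero)))
  have ha0 : a ≠ 0 := by
    rintro rfl
    exact hf0 (by rw [ha, C_0])
  refine ⟨b * a⁻¹, ?_⟩
  calc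
    DeltaP S k l = DeltaP S k l * C a * C a⁻¹ := by
      rw [mul_assoc, ← C_mul, mul_inv_cancel₀ ha0, C_1, mul_one]
    _ = C (b * a⁻¹) * DeltaP S l k := by rw [hmul, C_mul]; ring

end Independence

section BraidIdeal

theorem smul_mem_twoSidedIdeal {I : TwoSidedIdeal (DD S)} (f : Ad d) {x : DD S} (hx : x ∈ I) :
    f • x ∈ I :=
  I.mul_mem_left _ _ hx

theorem DeltaP_smul_altProd_mem {k l : Fin n} (hkl : k ≠ l) {N : ℕ} (hN : mOrd S k l < N) :
    DeltaP S k l • altProd (GG S k) (GG S l) N ∈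
      TwoSidedIdeal.span (coxeterBraidSet S) := by
  obtain ⟨j, rfl⟩ := Nat.exists_eq_add_of_lt hN
  rw [add_assoc]
  let W := if Even (mOrd S k l) then altProd (GG S k) (GG S l) (j + 1)
    else altProd (GG S l) (GG S k) (j + 1)
  have hkill : altProd (GG S l) (GG S k) (mOrd S k l) * W = 0 :=
    altProd_mul_altProd_eq_zero (S.GG_mul_self k) (S.GG_mul_self l) (S.mOrd_pos k l) j.succ_pos
  have hrel : _ ∈ TwoSidedIdeal.span (coxeterBraidSet S) :=
    TwoSidedIdeal.subset_span ⟨k, l, hkl, rfl⟩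
  convert S.smul_mem_twoSidedIdeal ((-1) ^ mOrd S k l) (TwoSidedIdeal.mul_mem_right _ _ W hrel)
    using 1
  have hsign : (-1 : Ad d) ^ mOrd S k l * (-1) ^ mOrd S k l = 1 := by
    rw [← mul_pow, neg_one_mul, neg_neg, one_pow]
  rw [braidRelator_eq, smul_mul_assoc, smul_smul, hsign, one_smul, sub_mul, smul_mul_assoc,
    smul_mul_assoc, hkill, smul_zero, sub_zero, altProd_add]

theorem DeltaP_smul_altProd_swap_mem {k l : Fin n} (hkl : k ≠ l) {N : ℕ} (hN : mOrd S k l < N) :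
    DeltaP S k l • altProd (GG S l) (GG S k) N ∈
      TwoSidedIdeal.span (coxeterBraidSet S) := by
  obtain ⟨c, hc⟩ := S.exists_DeltaP_eq_C_mul k l
  rw [hc, mul_smul]
  exact S.smul_mem_twoSidedIdeal _ (S.DeltaP_smul_altProd_mem hkl.symm (S.mOrd_comm k l ▸ hN))

theorem demazure_smul_mem {I : TwoSidedIdeal (DD S)} {t : Fin n} {f : Ad d} {x : DD S}
    (hx : f • x ∈ I) (hGx : f • (GG S t * x) ∈ I) : S.demazure t f • x ∈ I := by
  have hDGx : S.demazure t f • (GG S t * x) ∈ I := by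
    simpa [GG_mul_smul, ← mul_assoc, GG_mul_self] using I.mul_mem_left (GG S t) _ hGx
  have hact : S.act (S.s t) f = f - lin (S.α t) * S.demazure t f := by
    rw [lin_α_mul_demazure, sub_sub_cancel]
  convert I.add_mem (I.sub_mem (I.mul_mem_left (GG S t) _ hx) hGx)
    (S.smul_mem_twoSidedIdeal (lin (S.α t)) hDGx) using 1
  rw [GG_mul_smul, hact]
  module

theorem demazure_smul_altProd_mem {I : TwoSidedIdeal (DD S)} {k l t : Fin n}
    (ht : t = k ∨ t = l) {f : Ad d} {M : ℕ}
    (hf : ∀ N > M, f • altProd (GG S k) (GG S l) N ∈ I ∧ f • altProd (GG S l) (GG S k) N ∈ I) :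
    ∀ N > M, S.demazure t f • altProd (GG S k) (GG S l) N ∈ I ∧
      S.demazure t f • altProd (GG S l) (GG S k) N ∈ I := by
  have hzero (a b : Fin n) {N : ℕ} (hN : M < N) :
      f • (GG S a * altProd (GG S a) (GG S b) N) ∈ I := by
    rw [mul_altProd_eq_zero (S.GG_mul_self a) _ (Nat.zero_lt_of_lt hN), smul_zero]
    exact I.zero_mem
  intro N hN
  obtain ⟨hkl, hlk⟩ := hf N hN
  obtain ⟨hkl', hlk'⟩ := hf (N + 1) (Nat.lt_succ_of_lt hN)
  rcases ht with rfl | rfl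
  · exact ⟨S.demazure_smul_mem hkl (hzero _ _ hN), S.demazure_smul_mem hlk hkl'⟩
  · exact ⟨S.demazure_smul_mem hkl hlk', S.demazure_smul_mem hlk (hzero _ _ hN)⟩

end BraidIdeal

end CoxeterSetup


/-- Lemma 3. For `k ≠ l`, `m = m_{kl}`, any `N ≥ 1` and any composition
`Ξ` of Demazure operators `D_k`, `D_l`, the elements `Ξ(Δ_{k,l})·G_kG_lG_k⋯` and
`Ξ(Δ_{k,l})·G_lG_kG_l⋯` (alternating products with `m + N` factors) lie in the two-sided
ideal generated by the Coxeter braid relators. -/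
theorem xi_delta_mul_long_altProd_mem_braid_ideal {d n : ℕ} (S : CoxeterSetup d n)
    (k l : Fin n) (hkl : k ≠ l)
    (D : Fin n → Ad d → Ad d)
    (hD : ∀ (i : Fin n) (f : Ad d),
      lin (S.α i) * D i f = f - glAct ((S.s i : S.Γ) : GL (Fin d) ℂ) f)
    (Ξ : List (Fin n)) (hΞ : ∀ t ∈ Ξ, t = k ∨ t = l)
    (N : ℕ) (hN : 1 ≤ N) :
    ofA S (Ξ.foldr (fun t x => D t x) (DeltaP S k l)) *
        altProd (GG S k) (GG S l) (mOrd S k l + N) ∈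
      TwoSidedIdeal.span (coxeterBraidSet S) ∧
    ofA S (Ξ.foldr (fun t x => D t x) (DeltaP S k l)) *
        altProd (GG S l) (GG S k) (mOrd S k l + N) ∈
      TwoSidedIdeal.span (coxeterBraidSet S) := by
  obtain rfl : D = fun i f => S.demazure i f := funext fun i => funext fun f =>
    S.eq_demazure (hD i f)
  suffices h : ∀ M > mOrd S k l,
      Ξ.foldr (fun t f => S.demazure t f) (DeltaP S k l) • altProd (GG S k) (GG S l) M ∈
        TwoSidedIdeal.span (coxeterBraidSet S) ∧
      Ξ.foldr (fun t f => S.demazure t f) (DeltaP S k l) • altProd (GG S l) (GG S k) M ∈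
        TwoSidedIdeal.span (coxeterBraidSet S) from h _ (Nat.lt_add_of_pos_right hN)
  induction Ξ with
  | nil => exact fun M hM =>
      ⟨S.DeltaP_smul_altProd_mem hkl hM, S.DeltaP_smul_altProd_swap_mem hkl hM⟩
  | cons t Ξ ih =>
    obtain ⟨ht, hΞ⟩ := List.forall_mem_cons.1 hΞ
    exact S.demazure_smul_altProd_mem ht (ih hΞ)
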